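/- In the finite discriminative clustering setup, the one-vs-all squared Hellinger GEMINI admits the estimable form ∑_{k=1}^K π(k)·H²(q_k, p) = 2 − 2·∑_{x∈X} p(x)·∑_{k=1}^K π(k)·√(c(x,k)/π(k)) (equivalently, 2 − 2·∑_{x∈X} p(x)·∑_{k=1}^K √(π(k)·c(x,k))). -/

import Mathlib

open Finset

/-!
Expanding the square gives `H²(r, s) = 2 - 2 BC(r, s)` for probability mass functions, where `BC`
is the Bhattacharyya coefficient. Since the cluster proportions sum to one, averaging over the
clusters leaves `2 - 2 ∑ₖ π(k) BC(qₖ, p)`. Finally `qₖ = p · c(·, k) / π(k)` has density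
`c(·, k) / π(k)` with respect to `p`, so `BC(qₖ, p)` is the `p`-expectation of `√(c(·, k) / π(k))`,
in which the unknown density `p` no longer appears under the root.
-/

section Hellinger

variable {X ι : Type*} [Fintype X] [Fintype ι]

/-- The squared Hellinger distance `H²(r, s)` between mass functions on a finite type, without the
normalizing factor `1 / 2`. -/
noncomputable def sqHellinger (r s : X → ℝ) : ℝ :=
  ∑ x, (√(r x) - √(s x)) ^ 2

/-- The Bhattacharyya coefficient `BC(r, s)`, the affinity of two mass functions through which the
squared Hellinger distance is computed. -/
noncomputable def bhattacharyyaCoeff (r s : X → ℝ) : ℝ :=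
  ∑ x, √(r x * s x)

theorem sqHellinger_eq_sum_add_sum_sub {r s : X → ℝ} (hr : ∀ x, 0 ≤ r x) (hs : ∀ x, 0 ≤ s x) :
    sqHellinger r s = ∑ x, r x + ∑ x, s x - 2 * bhattacharyyaCoeff r s := by
  have sq_sub (x : X) : (√(r x) - √(s x)) ^ 2 = r x + s x - 2 * √(r x * s x) := by
    rw [sub_sq, Real.sq_sqrt (hr x), Real.sq_sqrt (hs x), Real.sqrt_mul (hr x)]
    ring
  simp only [sqHellinger, bhattacharyyaCoeff, sq_sub, sum_sub_distrib, sum_add_distrib, mul_sum]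

theorem sqHellinger_eq_two_sub {r s : X → ℝ} (hr : ∀ x, 0 ≤ r x) (hs : ∀ x, 0 ≤ s x)
    (hr1 : ∑ x, r x = 1) (hs1 : ∑ x, s x = 1) :
    sqHellinger r s = 2 - 2 * bhattacharyyaCoeff r s := by
  rw [sqHellinger_eq_sum_add_sum_sub hr hs, hr1, hs1, one_add_one_eq_two]

theorem sum_mul_sqHellinger_eq_two_sub {w : ι → ℝ} {r : ι → X → ℝ} {s : X → ℝ}
    (hw1 : ∑ i, w i = 1) (hr : ∀ i x, 0 ≤ r i x) (hs : ∀ x, 0 ≤ s x)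
    (hr1 : ∀ i, ∑ x, r i x = 1) (hs1 : ∑ x, s x = 1) :
    ∑ i, w i * sqHellinger (r i) s = 2 - 2 * ∑ i, w i * bhattacharyyaCoeff (r i) s := by
  calc ∑ i, w i * sqHellinger (r i) s
      = ∑ i, (w i * 2 - 2 * (w i * bhattacharyyaCoeff (r i) s)) :=
        sum_congr rfl fun i _ ↦ by rw [sqHellinger_eq_two_sub (hr i) hs (hr1 i) hs1]; ring
    _ = 2 - 2 * ∑ i, w i * bhattacharyyaCoeff (r i) s := by
        rw [sum_sub_distrib, ← sum_mul, ← mul_sum, hw1, one_mul]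

theorem bhattacharyyaCoeff_mul_left {p : X → ℝ} (hp : ∀ x, 0 ≤ p x) (f : X → ℝ) :
    bhattacharyyaCoeff (fun x ↦ p x * f x) p = ∑ x, p x * √(f x) :=
  sum_congr rfl fun x _ ↦ by
    rw [mul_right_comm, Real.sqrt_mul (mul_self_nonneg _), Real.sqrt_mul_self (hp x)]

end Hellinger

section Clustering

variable {X κ : Type*} [Fintype X]

/-- The proportion `π(k)` of cluster `k` when `p` is the data distribution and `c x` is the
clustering posterior at `x`. -/
def clusterProportion (p : X → ℝ) (c : X → κ → ℝ) (k : κ) : ℝ :=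
  ∑ x, p x * c x k

/-- The conditional distribution `qₖ` of the data given cluster `k`, by Bayes' rule. It is
identically `0` if the cluster has proportion `0`. -/
noncomputable def clusterConditional (p : X → ℝ) (c : X → κ → ℝ) (k : κ) (x : X) : ℝ :=
  p x * c x k / clusterProportion p c k

theorem sum_clusterProportion [Fintype κ] (p : X → ℝ) {c : X → κ → ℝ}
    (hc1 : ∀ x, ∑ k, c x k = 1) :
    ∑ k, clusterProportion p c k = ∑ x, p x := by
  simp only [clusterProportion]
  rw [sum_comm]
  simp only [← mul_sum, hc1, mul_one]

theorem clusterConditional_nonneg {p : X → ℝ} {c : X → κ → ℝ} {k : κ}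
    (hp : ∀ x, 0 ≤ p x) (hc : ∀ x, 0 ≤ c x k) (x : X) :
    0 ≤ clusterConditional p c k x :=
  div_nonneg (mul_nonneg (hp x) (hc x)) (sum_nonneg fun y _ ↦ mul_nonneg (hp y) (hc y))

theorem sum_clusterConditional {p : X → ℝ} {c : X → κ → ℝ} {k : κ}
    (hk : clusterProportion p c k ≠ 0) :
    ∑ x, clusterConditional p c k x = 1 := by
  simp only [clusterConditional]
  rw [← sum_div]
  exact div_self hk

theorem bhattacharyyaCoeff_clusterConditional {p : X → ℝ} (hp : ∀ x, 0 ≤ p x)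
    (c : X → κ → ℝ) (k : κ) :
    bhattacharyyaCoeff (clusterConditional p c k) p
      = ∑ x, p x * √(c x k / clusterProportion p c k) := by
  rw [← bhattacharyyaCoeff_mul_left hp]
  congr 1
  exact funext fun x ↦ mul_div_assoc _ _ _

end Clustering

theorem mul_sqrt_div {a : ℝ} (ha : 0 ≤ a) (b : ℝ) : a * √(b / a) = √(a * b) := by
  rw [Real.sqrt_div' b ha, Real.sqrt_mul ha, mul_div_left_comm, Real.div_sqrt, mul_comm]

/-- In the finite discriminative clustering setup, the one-vs-all
squared Hellinger GEMINI admits the estimable form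
`∑ₖ π(k)·H²(qₖ, p) = 2 − 2·∑ₓ p(x)·∑ₖ π(k)·√(c(x,k)/π(k))`, equivalently
`2 − 2·∑ₓ p(x)·∑ₖ √(π(k)·c(x,k))`. -/
theorem gemini_ova_hellinger_estimable_form
    {X : Type*} [Fintype X] [Nonempty X]
    (p : X → ℝ) (hp : ∀ x, 0 < p x) (hp1 : ∑ x, p x = 1)
    (K : ℕ) (hK : 0 < K)
    (c : X → Fin K → ℝ) (hc : ∀ x k, 0 ≤ c x k) (hc1 : ∀ x, ∑ k, c x k = 1)
    (pr : Fin K → ℝ) (hpr : ∀ k, pr k = ∑ x, p x * c x k) (hprpos : ∀ k, 0 < pr k)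
    (q : Fin K → X → ℝ) (hq : ∀ k x, q k x = p x * c x k / pr k) :
    (∑ k, pr k * ∑ x, (Real.sqrt (q k x) - Real.sqrt (p x)) ^ 2
        = 2 - 2 * ∑ x, p x * ∑ k, pr k * Real.sqrt (c x k / pr k))
    ∧ (∑ k, pr k * ∑ x, (Real.sqrt (q k x) - Real.sqrt (p x)) ^ 2
        = 2 - 2 * ∑ x, p x * ∑ k, Real.sqrt (pr k * c x k)) := by
  obtain rfl : pr = clusterProportion p c := funext hpr
  obtain rfl : q = clusterConditional p c := funext₂ hq
  have hp0 (x : X) : 0 ≤ p x := (hp x).le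
  have estimable : ∑ k, clusterProportion p c k * sqHellinger (clusterConditional p c k) p
      = 2 - 2 * ∑ x, p x * ∑ k, clusterProportion p c k * √(c x k / clusterProportion p c k) := by
    rw [sum_mul_sqHellinger_eq_two_sub ((sum_clusterProportion p hc1).trans hp1)
      (fun k ↦ clusterConditional_nonneg hp0 (hc · k)) hp0
      (fun k ↦ sum_clusterConditional (hprpos k).ne') hp1]
    simp only [bhattacharyyaCoeff_clusterConditional hp0, mul_sum, mul_left_comm (p _)]
    rw [sum_comm]
  refine ⟨estimable, estimable.trans ?_⟩
  simp only [mul_sqrt_div (hprpos _).le]
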